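/- The Dedekind zeta value of the cone, ζ_{K;C}(3) = ∑_{γ∈C} 1/N(γ)³, equals the Lebesgue integral of f₀(C; t₁, t₂) over the region {(t₁,t₂,u₁,u₂,v₁,v₂) ∈ ℝ⁶ : t₁ > u₁ > v₁ > 0, t₂ > u₂ > v₂ > 0}. -/

import Mathlib

/-!
Each summand of the generating function is a product of two exponentials, and the region is a
product of two simplices `{t > u > v > 0}`. Integrating out `t`, `u`, `v` in this order divides
`exp (-x t)` by `x` each time, so by Tonelli (`lintegral_split`, `lintegral_simplex`) the summand
of `γ` has integral `1 / (γ₁³ γ₂³) = 1 / N(γ)³`. The sum and the integral may be exchanged because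
the summands are nonnegative and `∑ 1 / N(γ)³` converges: for `γ = a + bβ` one has `γ₁ ≥ b` and
`γ₂ ≥ a`, so `N(γ) ≥ ab`.
-/

open MeasureTheory Real

/-- First/second real embedding of the cone element γ = a + b·β (a, b positive
integers), with σⱼ(β) = β. -/
noncomputable def coneEmb (β : ℝ) (p : ℕ+ × ℕ+) : ℝ := (p.1 : ℝ) + (p.2 : ℝ) * β

/-- The generating function of the cone, f₀(C;t₁,t₂) = ∑_{γ∈C} exp(−γ₁t₁ − γ₂t₂). -/
noncomputable def coneGenFun (β₁ β₂ : ℝ) (t₁ t₂ : ℝ) : ℝ :=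
  ∑' p : ℕ+ × ℕ+, exp (-(coneEmb β₁ p * t₁) - coneEmb β₂ p * t₂)

open scoped ENNReal

/-- The weight `exp (-x t)` restricted to the simplex `{(t, u, v) : t > u > v > 0}`. -/
noncomputable def simplexWeight (x : ℝ) (r : ℝ × ℝ × ℝ) : ℝ≥0∞ :=
  {r : ℝ × ℝ × ℝ | r.2.1 < r.1 ∧ r.2.2 < r.2.1 ∧ 0 < r.2.2}.indicator
    (fun r => ENNReal.ofReal (exp (-(x * r.1)))) r

lemma measurable_simplexWeight (x : ℝ) : Measurable (simplexWeight x) := by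
  refine Measurable.indicator (by fun_prop) ?_
  measurability

lemma lintegral_exp_Ioi {x : ℝ} (hx : 0 < x) (u : ℝ) :
    ∫⁻ t in Set.Ioi u, ENNReal.ofReal (exp (-(x * t))) =
      ENNReal.ofReal (exp (-(x * u))) * ENNReal.ofReal x⁻¹ := by
  have hi : IntegrableOn (fun t => exp (-(x * t))) (Set.Ioi u) := by
    simpa using integrableOn_exp_mul_Ioi (a := -x) (by linarith) u
  rw [← ofReal_integral_eq_lintegral_ofReal hi
    (Filter.Eventually.of_forall fun t => (exp_pos _).le),
    ← ENNReal.ofReal_mul (exp_pos _).le]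
  have := integral_exp_mul_Ioi (a := -x) (by linarith) u
  simp only [neg_mul] at this
  rw [this, neg_div_neg_eq, div_eq_mul_inv]

lemma lintegral_simplex {x : ℝ} (hx : 0 < x) :
    ∫⁻ r, simplexWeight x r = ENNReal.ofReal x⁻¹ ^ 3 := by
  have hm := measurable_simplexWeight x
  have hm' : Measurable fun z : ℝ × ℝ => ∫⁻ t, simplexWeight x (t, z) :=
    hm.lintegral_prod_left'
  have h1 : ∀ u v : ℝ, ∫⁻ t, simplexWeight x (t, u, v) =
      (Set.Ioi v).indicator (fun u => (Set.Ioi (0 : ℝ)).indicator (fun _ =>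
        ENNReal.ofReal (exp (-(x * u))) * ENNReal.ofReal x⁻¹) v) u := by
    intro u v
    by_cases h : v < u ∧ 0 < v
    · rw [Set.indicator_of_mem (by exact h.1), Set.indicator_of_mem (by exact h.2),
        ← lintegral_exp_Ioi hx, ← lintegral_indicator measurableSet_Ioi]
      refine lintegral_congr fun t => ?_
      simp [simplexWeight, Set.indicator_apply, h]
    · have : ∀ t, simplexWeight x (t, u, v) = 0 := fun t =>
        Set.indicator_of_notMem (fun hh => h hh.2) _
      simp only [this, lintegral_zero]
      simp only [Set.indicator_apply, Set.mem_Ioi]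
      split_ifs <;> simp_all
  have h2 : ∀ v : ℝ, ∫⁻ u, ∫⁻ t, simplexWeight x (t, u, v) =
      (Set.Ioi (0 : ℝ)).indicator (fun v =>
        ENNReal.ofReal (exp (-(x * v))) * ENNReal.ofReal x⁻¹ ^ 2) v := by
    intro v
    simp only [h1]
    rw [lintegral_indicator measurableSet_Ioi]
    by_cases h : 0 < v
    · simp only [Set.indicator_of_mem (show v ∈ Set.Ioi (0 : ℝ) from h)]
      rw [lintegral_mul_const _ (by fun_prop), lintegral_exp_Ioi hx, mul_assoc, sq]
    · simp [h]
  rw [Measure.volume_eq_prod, lintegral_prod_symm' _ hm, Measure.volume_eq_prod,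
    lintegral_prod_symm' _ hm']
  simp only [h2]
  rw [lintegral_indicator measurableSet_Ioi, lintegral_mul_const _ (by fun_prop),
    lintegral_exp_Ioi hx]
  simp only [mul_zero, neg_zero, exp_zero, ENNReal.ofReal_one, one_mul]
  ring

/-- Tonelli for a product of a function of the odd and a function of the even coordinates. -/
lemma lintegral_split {F G : ℝ × ℝ × ℝ → ℝ≥0∞} (hF : Measurable F) (hG : Measurable G) :
    ∫⁻ q : ℝ × ℝ × ℝ × ℝ × ℝ × ℝ,
        F (q.1, q.2.2.1, q.2.2.2.2.1) * G (q.2.1, q.2.2.2.1, q.2.2.2.2.2) =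
      (∫⁻ r, F r) * ∫⁻ r, G r := by
  have e : ∀ {H : ℝ × ℝ × ℝ → ℝ≥0∞}, Measurable H →
      ∫⁻ r, H r = ∫⁻ a, ∫⁻ b, ∫⁻ c, H (a, b, c) := by
    intro H hH
    rw [Measure.volume_eq_prod, lintegral_prod _ hH.aemeasurable]
    refine lintegral_congr fun a => ?_
    rw [Measure.volume_eq_prod, lintegral_prod _ (by fun_prop)]
  have mF1 : Measurable fun z : ℝ × ℝ => ∫⁻ c, F (z.1, z.2, c) :=
    Measurable.lintegral_prod_right' (f := fun w : (ℝ × ℝ) × ℝ => F (w.1.1, w.1.2, w.2))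
      (by fun_prop)
  have mG1 : Measurable fun z : ℝ × ℝ => ∫⁻ c, G (z.1, z.2, c) :=
    Measurable.lintegral_prod_right' (f := fun w : (ℝ × ℝ) × ℝ => G (w.1.1, w.1.2, w.2))
      (by fun_prop)
  have mF2 : Measurable fun a : ℝ => ∫⁻ b, ∫⁻ c, F (a, b, c) := mF1.lintegral_prod_right'
  have mG2 : Measurable fun a : ℝ => ∫⁻ b, ∫⁻ c, G (a, b, c) := mG1.lintegral_prod_right'
  rw [Measure.volume_eq_prod, lintegral_prod _ (by fun_prop), e hF, e hG,
    ← lintegral_mul_const _ mF2]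
  refine lintegral_congr fun t₁ => ?_
  rw [Measure.volume_eq_prod, lintegral_prod _ (by fun_prop), ← lintegral_const_mul _ mG2]
  refine lintegral_congr fun t₂ => ?_
  rw [Measure.volume_eq_prod, lintegral_prod _ (by fun_prop),
    ← lintegral_mul_const _ (by fun_prop)]
  refine lintegral_congr fun u₁ => ?_
  rw [Measure.volume_eq_prod, lintegral_prod _ (by fun_prop),
    ← lintegral_const_mul _ (by fun_prop)]
  refine lintegral_congr fun u₂ => ?_
  rw [Measure.volume_eq_prod, lintegral_prod _ (by fun_prop),
    ← lintegral_mul_const _ (by fun_prop)]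
  refine lintegral_congr fun v₁ => ?_
  rw [← lintegral_const_mul _ (by fun_prop)]

/-- The domain of integration, `t₁ > u₁ > v₁ > 0` and `t₂ > u₂ > v₂ > 0`. -/
def coneRegion : Set (ℝ × ℝ × ℝ × ℝ × ℝ × ℝ) :=
  {q | q.2.2.1 < q.1 ∧ q.2.2.2.2.1 < q.2.2.1 ∧ 0 < q.2.2.2.2.1 ∧
    q.2.2.2.1 < q.2.1 ∧ q.2.2.2.2.2 < q.2.2.2.1 ∧ 0 < q.2.2.2.2.2}

lemma measurableSet_coneRegion : MeasurableSet coneRegion := by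
  unfold coneRegion
  measurability

lemma lintegral_coneRegion {x y : ℝ} (hx : 0 < x) (hy : 0 < y) :
    ∫⁻ q in coneRegion, ENNReal.ofReal (exp (-(x * q.1) - y * q.2.1)) =
      ENNReal.ofReal (1 / (x * y) ^ 3) := by
  have h : ∀ q : ℝ × ℝ × ℝ × ℝ × ℝ × ℝ,
      coneRegion.indicator (fun q => ENNReal.ofReal (exp (-(x * q.1) - y * q.2.1))) q =
      simplexWeight x (q.1, q.2.2.1, q.2.2.2.2.1) *
        simplexWeight y (q.2.1, q.2.2.2.1, q.2.2.2.2.2) := by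
    intro q
    simp only [sub_eq_add_neg, exp_add, ENNReal.ofReal_mul (exp_pos _).le, simplexWeight,
      coneRegion, Set.indicator_apply, Set.mem_ofPred_eq]
    split_ifs <;> simp_all
  rw [← lintegral_indicator measurableSet_coneRegion, lintegral_congr h,
    lintegral_split (measurable_simplexWeight x) (measurable_simplexWeight y),
    lintegral_simplex hx, lintegral_simplex hy, ← mul_pow,
    ← ENNReal.ofReal_mul (by positivity), ← ENNReal.ofReal_pow (by positivity)]
  congr 1
  field_simp

lemma integrableOn_coneRegion {x y : ℝ} (hx : 0 < x) (hy : 0 < y) :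
    IntegrableOn (fun q : ℝ × ℝ × ℝ × ℝ × ℝ × ℝ => exp (-(x * q.1) - y * q.2.1))
      coneRegion := by
  refine ⟨(by fun_prop : Measurable _).aestronglyMeasurable, ?_⟩
  rw [hasFiniteIntegral_iff_ofReal (Filter.Eventually.of_forall fun q => (exp_pos _).le),
    lintegral_coneRegion hx hy]
  exact ENNReal.ofReal_lt_top

lemma integral_coneRegion {x y : ℝ} (hx : 0 < x) (hy : 0 < y) :
    ∫ q in coneRegion, exp (-(x * q.1) - y * q.2.1) = 1 / (x * y) ^ 3 := by
  rw [integral_eq_lintegral_of_nonneg_ae (Filter.Eventually.of_forall fun q => (exp_pos _).le)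
    (by fun_prop : Measurable _).aestronglyMeasurable, lintegral_coneRegion hx hy,
    ENNReal.toReal_ofReal (by positivity)]

lemma coneEmb_pos {β : ℝ} (hβ : 0 < β) (p : ℕ+ × ℕ+) : 0 < coneEmb β p := by
  have h1 : (0 : ℝ) < (p.1 : ℝ) := by exact_mod_cast p.1.pos
  have h2 : (0 : ℝ) < (p.2 : ℝ) := by exact_mod_cast p.2.pos
  unfold coneEmb
  positivity

/-- The norm of `a + bβ` is at least `a * b`, so the sum is dominated by `∑ 1 / (ab)³`. -/
lemma summable_cone {β₁ β₂ : ℝ} (hβ₁ : 1 < β₁) (hβ₂ : 0 < β₂) :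
    Summable fun p : ℕ+ × ℕ+ => 1 / (coneEmb β₁ p * coneEmb β₂ p) ^ 3 := by
  have h0 : Summable fun n : ℕ+ => 1 / ((n : ℕ) : ℝ) ^ 3 :=
    (Real.summable_one_div_nat_pow.mpr (by norm_num : 1 < 3)).comp_injective PNat.coe_injective
  refine Summable.of_nonneg_of_le (fun p => ?_) (fun p => ?_)
    (h0.mul_of_nonneg h0 (fun n => by positivity) fun n => by positivity)
  · have := coneEmb_pos (by linarith : 0 < β₁) p
    have := coneEmb_pos hβ₂ p
    positivity
  · have h1 : (0 : ℝ) < (p.1 : ℝ) := by exact_mod_cast p.1.pos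
    have h2 : (0 : ℝ) < (p.2 : ℝ) := by exact_mod_cast p.2.pos
    have e1 : (p.2 : ℝ) ≤ coneEmb β₁ p := by unfold coneEmb; nlinarith
    have e2 : (p.1 : ℝ) ≤ coneEmb β₂ p := by unfold coneEmb; nlinarith
    rw [one_div_mul_one_div_rev, ← mul_pow]
    gcongr
    exact h2.le.trans e1

/-- ζ_{K;C}(3) = ∑_{γ∈C} 1/N(γ)³ equals the Lebesgue integral of f₀(C;t₁,t₂) over
the region {(t₁,t₂,u₁,u₂,v₁,v₂) : t₁ > u₁ > v₁ > 0, t₂ > u₂ > v₂ > 0}. -/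
theorem dedekindZeta_cone_three_eq_integral (β₁ β₂ : ℝ)
    (hβ₁ : 1 < β₁) (hβ₂ : 0 < β₂) (hβ₂' : β₂ < 1) :
    (∑' p : ℕ+ × ℕ+, 1 / (coneEmb β₁ p * coneEmb β₂ p) ^ 3) =
      ∫ q in {q : ℝ × ℝ × ℝ × ℝ × ℝ × ℝ |
          q.2.2.1 < q.1 ∧ q.2.2.2.2.1 < q.2.2.1 ∧ 0 < q.2.2.2.2.1 ∧
          q.2.2.2.1 < q.2.1 ∧ q.2.2.2.2.2 < q.2.2.2.1 ∧ 0 < q.2.2.2.2.2},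
        coneGenFun β₁ β₂ q.1 q.2.1 := by
  have p1 := coneEmb_pos (by linarith : 0 < β₁)
  have p2 := coneEmb_pos hβ₂
  change _ = ∫ q in coneRegion, coneGenFun β₁ β₂ q.1 q.2.1
  unfold coneGenFun
  rw [← integral_tsum_of_summable_integral_norm
    (fun p => integrableOn_coneRegion (p1 p) (p2 p))]
  · exact tsum_congr fun p => (integral_coneRegion (p1 p) (p2 p)).symm
  · simp only [Real.norm_eq_abs, abs_exp]
    simpa only [integral_coneRegion (p1 _) (p2 _)] using summable_cone hβ₁ hβ₂
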